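/- The family of context-free languages of finite index is strictly contained in the union over all k ∈ ℕ of the families of languages generated by CD grammar systems with at most two context-free components working in the (t∧=k)-mode: L_fin(CF) ⊊ ⋃_{k∈ℕ} L(CD_2, CF[−λ], (t∧=k)), both with and without erasing rules. -/

import Mathlib

namespace CDHybrid

/-- Symbols: nonterminals are natural numbers, terminals come from `T`. -/
abbrev Symb (T : Type) := ℕ ⊕ T

/-- Sentential forms. -/
abbrev SForm (T : Type) := List (Symb T)

/-- A context-free rule `A → z`. -/
abbrev Rule (T : Type) := ℕ × SForm T

/-- Number of nonterminal occurrences in a sentential form. -/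
def ntCount {T : Type} (x : SForm T) : ℕ := (x.filter Sum.isLeft).length

/-- One rewriting step using some rule of the rule set `P`. -/
def RStep {T : Type} (P : List (Rule T)) (x y : SForm T) : Prop :=
  ∃ r ∈ P, ∃ u v : SForm T, x = u ++ Sum.inl r.1 :: v ∧ y = u ++ r.2 ++ v

/-- `m`-step derivation using only rules of `P`. -/
def StepsN {T : Type} (P : List (Rule T)) : ℕ → SForm T → SForm T → Prop
  | 0, x, y => x = y
  | m + 1, x, y => ∃ z, RStep P x z ∧ StepsN P m z y

/-- `m`-step derivation using only rules of `P`, all intermediate (and the final)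
sentential forms having at most `b` occurrences of nonterminals. -/
def StepsNB {T : Type} (P : List (Rule T)) (b : ℕ) : ℕ → SForm T → SForm T → Prop
  | 0, x, y => x = y
  | m + 1, x, y => ∃ z, RStep P x z ∧ ntCount z ≤ b ∧ StepsNB P b m z y

/-- Derivation modes of CD grammar systems. -/
inductive Mode where
  | eq : ℕ → Mode
  | le : ℕ → Mode
  | ge : ℕ → Mode
  | star : Mode
  | t : Mode
  | conj : Mode → Mode → Mode

/-- The predicate of a derivation mode: `modeOK P f m y` holds if an `m`-step
derivation by the component `P` ending in `y` is acceptable for mode `f`. -/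
def modeOK {T : Type} (P : List (Rule T)) : Mode → ℕ → SForm T → Prop
  | .eq k, m, _ => m = k
  | .le k, m, _ => m ≤ k
  | .ge k, m, _ => k ≤ m
  | .star, _, _ => True
  | .t, _, y => ¬ ∃ z, RStep P y z
  | .conj f g, m, y => modeOK P f m y ∧ modeOK P g m y

/-- A CD grammar system with context-free components. -/
structure CDGS (T : Type) where
  deg : ℕ
  start : ℕ
  comp : Fin deg → List (Rule T)

/-- λ-freeness: no erasing rules. -/
def CDGS.LamFree {T : Type} (G : CDGS T) : Prop :=
  ∀ i : Fin G.deg, ∀ r ∈ G.comp i, r.2 ≠ []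

/-- One derivation step of a component of `G` in mode `f`. -/
def CDGS.ModeStep {T : Type} (G : CDGS T) (f : Mode) (x y : SForm T) : Prop :=
  ∃ i : Fin G.deg, ∃ m : ℕ, StepsN (G.comp i) m x y ∧ modeOK (G.comp i) f m y

/-- One derivation step of a component of `G` in mode `f`, with all produced
sentential forms having at most `b` nonterminal occurrences. -/
def CDGS.ModeStepB {T : Type} (G : CDGS T) (f : Mode) (b : ℕ) (x y : SForm T) : Prop :=
  ∃ i : Fin G.deg, ∃ m : ℕ, StepsNB (G.comp i) b m x y ∧ modeOK (G.comp i) f m y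

/-- The language generated by `G` in mode `f`. -/
def CDGS.lang {T : Type} (G : CDGS T) (f : Mode) : Set (List T) :=
  { w | Relation.TransGen (G.ModeStep f) [Sum.inl G.start] (w.map Sum.inr) }

/-- The words of the language of `G` in mode `f` possessing a derivation of index
at most `b`, i.e., all sentential forms occurring in it have at most `b`
nonterminal occurrences. -/
def CDGS.langB {T : Type} (G : CDGS T) (f : Mode) (b : ℕ) : Set (List T) :=
  { w | ntCount ([Sum.inl G.start] : SForm T) ≤ b ∧
      Relation.TransGen (G.ModeStepB f b) [Sum.inl G.start] (w.map Sum.inr) }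

/-- Two languages are considered equal iff they differ at most in the empty word. -/
def EqL {T : Type} (L₁ L₂ : Set (List T)) : Prop := L₁ \ {[]} = L₂ \ {[]}

/-- The family `L(CD_n, CF[−λ], f)`; `lf = true` forbids erasing rules. -/
def CDFam (T : Type) (lf : Bool) (n : ℕ) (f : Mode) : Set (Set (List T)) :=
  { L | ∃ G : CDGS T, G.deg ≤ n ∧ (lf = true → G.LamFree) ∧ EqL (G.lang f) L }

/-- The family `L(CD_∞, CF[−λ], f)`. -/
def CDFamInf (T : Type) (lf : Bool) (f : Mode) : Set (Set (List T)) :=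
  { L | ∃ G : CDGS T, (lf = true → G.LamFree) ∧ EqL (G.lang f) L }

/-- The family `L_m(CD_n, CF[−λ], f)` of such languages of index at most `m`. -/
def CDFamInd (T : Type) (lf : Bool) (n : ℕ) (f : Mode) (m : ℕ) : Set (Set (List T)) :=
  { L | ∃ G : CDGS T, G.deg ≤ n ∧ (lf = true → G.LamFree) ∧ EqL (G.lang f) L ∧
      G.lang f ⊆ G.langB f m }

/-- The family `L_m(CD_∞, CF[−λ], f)`. -/
def CDFamIndInf (T : Type) (lf : Bool) (f : Mode) (m : ℕ) : Set (Set (List T)) :=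
  { L | ∃ G : CDGS T, (lf = true → G.LamFree) ∧ EqL (G.lang f) L ∧ G.lang f ⊆ G.langB f m }

/-- The family `L_fin(CD_∞, CF[−λ], f)`. -/
def CDFamFinInf (T : Type) (lf : Bool) (f : Mode) : Set (Set (List T)) :=
  { L | ∃ m : ℕ, 1 ≤ m ∧ L ∈ CDFamIndInf T lf f m }

/-- A context-free grammar. -/
structure CFG (T : Type) where
  start : ℕ
  rules : List (Rule T)

/-- The language generated by a context-free grammar. -/
def CFG.lang {T : Type} (G : CFG T) : Set (List T) :=
  { w | Relation.ReflTransGen (RStep G.rules) [Sum.inl G.start] (w.map Sum.inr) }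

/-- The words of `G.lang` having a derivation of index at most `m`. -/
def CFG.langB {T : Type} (G : CFG T) (m : ℕ) : Set (List T) :=
  { w | ntCount ([Sum.inl G.start] : SForm T) ≤ m ∧
      Relation.ReflTransGen (fun x y => RStep G.rules x y ∧ ntCount y ≤ m)
        [Sum.inl G.start] (w.map Sum.inr) }

/-- The family `L(CF)` of context-free languages. -/
def CFFam (T : Type) : Set (Set (List T)) := { L | ∃ G : CFG T, EqL G.lang L }

/-- The family `L_m(CF)` of context-free languages of index at most `m`. -/
def CFFamInd (T : Type) (m : ℕ) : Set (Set (List T)) :=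
  { L | ∃ G : CFG T, EqL G.lang L ∧ G.lang ⊆ G.langB m }

/-- The family `L_fin(CF)` of context-free languages of finite index. -/
def CFFamFin (T : Type) : Set (Set (List T)) :=
  { L | ∃ m : ℕ, 1 ≤ m ∧ L ∈ CFFamInd T m }

/-- A grammar is linear if every right-hand side contains at most one nonterminal. -/
def CFG.Linear {T : Type} (G : CFG T) : Prop := ∀ r ∈ G.rules, ntCount r.2 ≤ 1

/-- The family `L(LIN)` of linear context-free languages. -/
def LinFam (T : Type) : Set (Set (List T)) :=
  { L | ∃ G : CFG T, G.Linear ∧ EqL G.lang L }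

/-- The family `L(FIN)` of finite languages. -/
def FinFam (T : Type) : Set (Set (List T)) := { L | L.Finite }

/-- A programmed grammar with context-free rules. -/
structure PG (T : Type) where
  start : ℕ
  nLab : ℕ
  rule : Fin nLab → Rule T
  succ : Fin nLab → Set (Fin nLab)
  fail : Fin nLab → Set (Fin nLab)

def PG.LamFree {T : Type} (G : PG T) : Prop := ∀ r : Fin G.nLab, (G.rule r).2 ≠ []

/-- No appearance checking: all failure fields are empty. -/
def PG.NoAC {T : Type} (G : PG T) : Prop := ∀ r : Fin G.nLab, G.fail r = ∅

/-- One step of a programmed grammar on pairs (sentential form, label). -/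
def PG.PStep {T : Type} (G : PG T) (p q : SForm T × Fin G.nLab) : Prop :=
  (∃ u v : SForm T, p.1 = u ++ Sum.inl (G.rule p.2).1 :: v ∧
      q.1 = u ++ (G.rule p.2).2 ++ v ∧ q.2 ∈ G.succ p.2) ∨
  (Sum.inl (G.rule p.2).1 ∉ p.1 ∧ q.1 = p.1 ∧ q.2 ∈ G.fail p.2)

/-- The language generated by a programmed grammar. -/
def PG.lang {T : Type} (G : PG T) : Set (List T) :=
  { w | ∃ r₁ r₂ : Fin G.nLab,
      Relation.ReflTransGen G.PStep ([Sum.inl G.start], r₁) (w.map Sum.inr, r₂) }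

/-- The words of `G.lang` having a derivation of index at most `m`. -/
def PG.langB {T : Type} (G : PG T) (m : ℕ) : Set (List T) :=
  { w | ∃ r₁ r₂ : Fin G.nLab, ntCount ([Sum.inl G.start] : SForm T) ≤ m ∧
      Relation.ReflTransGen (fun p q => G.PStep p q ∧ ntCount q.1 ≤ m)
        ([Sum.inl G.start], r₁) (w.map Sum.inr, r₂) }

/-- The family `L_m(P, CF[−λ][, ac])`: programmed languages of index at most `m`;
`ac = false` forbids appearance checking, `lf = true` forbids erasing rules. -/
def PFamInd (T : Type) (lf ac : Bool) (m : ℕ) : Set (Set (List T)) :=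
  { L | ∃ G : PG T, (lf = true → G.LamFree) ∧ (ac = false → G.NoAC) ∧
      EqL G.lang L ∧ G.lang ⊆ G.langB m }

/-- The family `L_fin(P, CF[−λ][, ac])` of programmed languages of finite index. -/
def PFamFin (T : Type) (lf ac : Bool) : Set (Set (List T)) :=
  { L | ∃ m : ℕ, 1 ≤ m ∧ L ∈ PFamInd T lf ac m }


section Helpers

variable {T : Type}

abbrev Der (P : List (Rule T)) := Relation.ReflTransGen (RStep P)

lemma RStep.ctx {P : List (Rule T)} {x y : SForm T} (h : RStep P x y) (u v : SForm T) :
    RStep P (u ++ x ++ v) (u ++ y ++ v) := by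
  obtain ⟨r, hr, a, b, rfl, rfl⟩ := h
  exact ⟨r, hr, u ++ a, b ++ v, by simp, by simp⟩

lemma Der.ctx {P : List (Rule T)} {x y : SForm T} (h : Der P x y) (u v : SForm T) :
    Der P (u ++ x ++ v) (u ++ y ++ v) := by
  induction h with
  | refl => exact .refl
  | tail _ h2 ih => exact ih.tail (h2.ctx u v)

lemma Der.app {P : List (Rule T)} {x y x' y' : SForm T} (h : Der P x x') (h' : Der P y y') :
    Der P (x ++ y) (x' ++ y') := by
  have h1 := Der.ctx h [] y
  have h2 := Der.ctx h' x' []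
  simp only [List.nil_append, List.append_nil] at h1 h2
  exact h1.trans h2

lemma rstep_append {P : List (Rule T)} {x y z : SForm T} :
    RStep P (x ++ y) z ↔ (∃ x', RStep P x x' ∧ z = x' ++ y) ∨
      (∃ y', RStep P y y' ∧ z = x ++ y') := by
  constructor
  · rintro ⟨r, hr, u, v, h1, rfl⟩
    rcases List.append_eq_append_iff.1 h1 with ⟨a, rfl, rfl⟩ | ⟨c, rfl, h2⟩
    · right
      exact ⟨a ++ r.2 ++ v, ⟨r, hr, a, v, rfl, rfl⟩, by simp⟩
    · cases c with
      | nil =>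
        right
        simp only [List.nil_append] at h2
        exact ⟨r.2 ++ v, ⟨r, hr, [], v, by simp [h2], by simp⟩, by simp⟩
      | cons d c =>
        left
        simp only [List.cons_append, List.cons.injEq] at h2
        obtain ⟨rfl, rfl⟩ := h2
        exact ⟨u ++ r.2 ++ c, ⟨r, hr, u, c, rfl, rfl⟩, by simp⟩
  · rintro (⟨x', h, rfl⟩ | ⟨y', h, rfl⟩)
    · simpa using h.ctx [] y
    · simpa using h.ctx x []

lemma rstep_mem {P : List (Rule T)} {x z : SForm T} (h : RStep P x z) :
    ∃ r ∈ P, Sum.inl r.1 ∈ x := by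
  obtain ⟨r, hr, u, v, rfl, rfl⟩ := h
  exact ⟨r, hr, by simp⟩

lemma rstep_term {P : List (Rule T)} {w : List T} {z : SForm T} :
    ¬ RStep P (w.map Sum.inr) z := by
  intro h
  obtain ⟨r, _, h⟩ := rstep_mem h
  simp at h

lemma rstep_nil {P : List (Rule T)} {z : SForm T} : ¬ RStep P [] z := by
  intro h
  obtain ⟨r, _, h⟩ := rstep_mem h
  simp at h

lemma rstep_single {P : List (Rule T)} {A : ℕ} {z : SForm T} :
    RStep P [Sum.inl A] z ↔ (A, z) ∈ P := by
  constructor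
  · rintro ⟨r, hr, u, v, h1, rfl⟩
    cases u with
    | nil =>
      simp only [List.nil_append, List.cons.injEq, Sum.inl.injEq] at h1
      obtain ⟨rfl, rfl⟩ := h1
      simpa using hr
    | cons a u => simp at h1
  · intro h
    exact ⟨_, h, [], [], by simp, by simp⟩

lemma StepsN.trans {P : List (Rule T)} {m n : ℕ} {x y z : SForm T}
    (h : StepsN P m x y) (h' : StepsN P n y z) : StepsN P (m + n) x z := by
  induction m generalizing x with
  | zero => cases h; simpa using h'
  | succ m ih =>
    obtain ⟨a, h1, h2⟩ := h
    have := ih h2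
    rw [Nat.add_right_comm]
    exact ⟨a, h1, this⟩

lemma StepsN.ctx {P : List (Rule T)} {m : ℕ} {x y : SForm T}
    (h : StepsN P m x y) (u v : SForm T) : StepsN P m (u ++ x ++ v) (u ++ y ++ v) := by
  induction m generalizing x with
  | zero => cases h; rfl
  | succ m ih =>
    obtain ⟨a, h1, h2⟩ := h
    exact ⟨_, h1.ctx u v, ih h2⟩

lemma StepsN.app {P : List (Rule T)} {m n : ℕ} {x y x' y' : SForm T}
    (h : StepsN P m x x') (h' : StepsN P n y y') : StepsN P (m + n) (x ++ y) (x' ++ y') := by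
  have h1 := h.ctx [] y
  have h2 := h'.ctx x' []
  simp only [List.nil_append, List.append_nil] at h1 h2
  exact h1.trans h2

lemma StepsN.der {P : List (Rule T)} {m : ℕ} {x y : SForm T}
    (h : StepsN P m x y) : Der P x y := by
  induction m generalizing x with
  | zero => cases h; exact .refl
  | succ m ih =>
    obtain ⟨a, h1, h2⟩ := h
    exact .head h1 (ih h2)

lemma Der.stepsN {P : List (Rule T)} {x y : SForm T}
    (h : Der P x y) : ∃ m, StepsN P m x y := by
  induction h using Relation.ReflTransGen.head_induction_on with
  | refl => exact ⟨0, rfl⟩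
  | head h1 _ ih =>
    obtain ⟨m, hm⟩ := ih
    exact ⟨m + 1, _, h1, hm⟩

lemma StepsN.split {P : List (Rule T)} {d : ℕ} {x y : SForm T} {w : List T}
    (h : StepsN P d (x ++ y) (w.map Sum.inr)) :
    ∃ d1 d2 w1 w2, d1 + d2 = d ∧ w = w1 ++ w2 ∧ StepsN P d1 x (w1.map Sum.inr) ∧
      StepsN P d2 y (w2.map Sum.inr) := by
  induction d generalizing x y with
  | zero =>
    have h : x ++ y = w.map Sum.inr := h
    obtain ⟨w1, w2, rfl, h1, h2⟩ := List.append_eq_map_iff.1 h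
    exact ⟨0, 0, w1, w2, rfl, rfl, h1.symm, h2.symm⟩
  | succ d ih =>
    obtain ⟨z, h1, h2⟩ := h
    rcases rstep_append.1 h1 with ⟨x', h3, rfl⟩ | ⟨y', h3, rfl⟩
    · obtain ⟨d1, d2, w1, w2, rfl, rfl, h4, h5⟩ := ih h2
      exact ⟨d1 + 1, d2, w1, w2, by omega, rfl, ⟨_, h3, h4⟩, h5⟩
    · obtain ⟨d1, d2, w1, w2, rfl, rfl, h4, h5⟩ := ih h2
      exact ⟨d1, d2 + 1, w1, w2, by omega, rfl, h4, ⟨_, h3, h5⟩⟩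

/-! Removing erasing rules. -/

inductive Del (P : List (Rule T)) : SForm T → SForm T → Prop
  | nil : Del P [] []
  | keep (a : Symb T) {x y : SForm T} : Del P x y → Del P (a :: x) (a :: y)
  | drop (A : ℕ) {x y : SForm T} : Der P [Sum.inl A] [] → Del P x y → Del P (Sum.inl A :: x) y

lemma Del.der {P : List (Rule T)} {x y : SForm T} (h : Del P x y) : Der P x y := by
  induction h with
  | nil => exact .refl
  | keep a _ ih => exact Der.app (x := [a]) (x' := [a]) .refl ih
  | drop A h _ ih => exact Der.app h ih

lemma Del.sublist {P : List (Rule T)} {x y : SForm T} (h : Del P x y) : y.Sublist x := by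
  induction h with
  | nil => simp
  | keep a _ ih => simpa using ih
  | drop A h _ ih => exact ih.cons _

lemma Del.refl {P : List (Rule T)} (x : SForm T) : Del P x x := by
  induction x with
  | nil => exact .nil
  | cons a x ih => exact .keep a ih

lemma Del.app {P : List (Rule T)} {x y x' y' : SForm T} (h : Del P x x') (h' : Del P y y') :
    Del P (x ++ y) (x' ++ y') := by
  induction h with
  | nil => simpa
  | keep a _ ih => exact .keep a ih
  | drop A h _ ih => exact .drop A h ih

lemma Del.split {P : List (Rule T)} {x y z : SForm T} (h : Del P (x ++ y) z) :
    ∃ x' y', z = x' ++ y' ∧ Del P x x' ∧ Del P y y' := by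
  induction x generalizing z with
  | nil => exact ⟨[], z, rfl, .nil, h⟩
  | cons a x ih =>
    cases h with
    | keep _ h =>
      obtain ⟨x', y', rfl, h1, h2⟩ := ih h
      exact ⟨a :: x', y', rfl, .keep a h1, h2⟩
    | drop A hA h =>
      obtain ⟨x', y', rfl, h1, h2⟩ := ih h
      exact ⟨x', y', rfl, .drop A hA h1, h2⟩

open Classical in
noncomputable def lfRules (P : List (Rule T)) : List (Rule T) :=
  P.flatMap fun r =>
    (r.2.sublists.filter (fun z => decide (z ≠ [] ∧ Der P r.2 z))).map (fun z => (r.1, z))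

lemma mem_lfRules {P : List (Rule T)} {s : Rule T} :
    s ∈ lfRules P ↔ ∃ z, (s.1, z) ∈ P ∧ s.2.Sublist z ∧ s.2 ≠ [] ∧ Der P z s.2 := by
  unfold lfRules
  simp only [List.mem_flatMap, List.mem_map, List.mem_filter, List.mem_sublists, decide_eq_true_eq]
  constructor
  · rintro ⟨r, hr, z, ⟨h1, h2, h3⟩, rfl⟩
    exact ⟨r.2, hr, h1, h2, h3⟩
  · rintro ⟨z, h0, h1, h2, h3⟩
    exact ⟨_, h0, s.2, ⟨h1, h2, h3⟩, rfl⟩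

lemma rstep_lf_der {P : List (Rule T)} {x y : SForm T} (h : RStep (lfRules P) x y) :
    Der P x y := by
  obtain ⟨r, hr, u, v, rfl, rfl⟩ := h
  obtain ⟨z, h1, _, _, h2⟩ := mem_lfRules.1 hr
  have h3 : Der P [Sum.inl r.1] r.2 := .head (rstep_single.2 h1) h2
  simpa using Der.ctx h3 u v

lemma ntCount_sublist {x y : SForm T} (h : x.Sublist y) : ntCount x ≤ ntCount y :=
  (h.filter _).length_le

abbrev BStep (P : List (Rule T)) (m : ℕ) (x y : SForm T) : Prop := RStep P x y ∧ ntCount y ≤ m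

lemma lf_complete {P : List (Rule T)} {m : ℕ} {x : SForm T} {w : List T}
    (h : Relation.ReflTransGen (BStep P m) x (w.map Sum.inr)) :
    ∃ x', Del P x x' ∧ Relation.ReflTransGen (BStep (lfRules P) m) x' (w.map Sum.inr) := by
  induction h using Relation.ReflTransGen.head_induction_on with
  | refl => exact ⟨_, Del.refl _, .refl⟩
  | head h1 _ ih =>
    obtain ⟨⟨r, hr, u, v, rfl, rfl⟩, hc⟩ := h1
    obtain ⟨y', hd, hy⟩ := ih
    obtain ⟨a, v', rfl, ha, hv⟩ := hd.split
    obtain ⟨u', z', rfl, hu, hz⟩ := ha.split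
    by_cases hz0 : z' = []
    · subst hz0
      refine ⟨u' ++ v', hu.app (.drop _ (.head (rstep_single.2 hr) hz.der) hv), by simpa using hy⟩
    · refine ⟨u' ++ Sum.inl r.1 :: v', hu.app (.keep _ hv), .head ⟨?_, ?_⟩ hy⟩
      · exact ⟨(r.1, z'), mem_lfRules.2 ⟨_, hr, hz.sublist, hz0, hz.der⟩, u', v', rfl, rfl⟩
      · exact (ntCount_sublist hd.sublist).trans hc

/-! The two component system. -/

def enc (A w p : ℕ) : ℕ := Nat.pair A (Nat.pair w p)

def dec : Symb T → Symb T
  | Sum.inl n => Sum.inl n.unpair.1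
  | Sum.inr a => Sum.inr a

inductive Wt (m p : ℕ) : SForm T → SForm T → ℕ → Prop
  | nil : Wt m p [] [] 0
  | term (a : T) {x X : SForm T} {s : ℕ} : Wt m p x X s →
      Wt m p (Sum.inr a :: x) (Sum.inr a :: X) s
  | nt (A w : ℕ) {x X : SForm T} {s : ℕ} : w < m → Wt m p x X s →
      Wt m p (Sum.inl A :: x) (Sum.inl (enc A w p) :: X) (w + 1 + s)

def weights (m p : ℕ) : SForm T → List (SForm T)
  | [] => [[]]
  | Sum.inr a :: x => (weights m p x).map (Sum.inr a :: ·)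
  | Sum.inl A :: x => (List.range m).flatMap fun w =>
      (weights m p x).map (Sum.inl (enc A w p) :: ·)

lemma Wt.mem {m p : ℕ} {x X : SForm T} {s : ℕ} (h : Wt m p x X s) : X ∈ weights m p x := by
  induction h with
  | nil => simp [weights]
  | term a _ ih => simpa [weights] using ih
  | nt A w hw _ ih =>
    simp only [weights, List.mem_flatMap, List.mem_map, List.mem_range]
    exact ⟨w, hw, _, ih, rfl⟩

lemma weights_dec {m p : ℕ} {x X : SForm T} (h : X ∈ weights m p x) : X.map dec = x := by
  induction x generalizing X with
  | nil => simpa [weights] using h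
  | cons a x ih =>
    cases a with
    | inl A =>
      simp only [weights, List.mem_flatMap, List.mem_map, List.mem_range] at h
      obtain ⟨w, _, Y, hY, rfl⟩ := h
      simp [ih hY, dec, enc]
    | inr a =>
      simp only [weights, List.mem_map] at h
      obtain ⟨Y, hY, rfl⟩ := h
      simp [ih hY, dec]

def comp2 (P : List (Rule T)) (m p q : ℕ) : List (Rule T) := P.flatMap fun r =>
  (List.range m).map (fun w => (enc r.1 (w+1) p, [Sum.inl (enc r.1 w p)])) ++
  (weights m q r.2).map (fun z => (enc r.1 0 p, z)) ++
  (weights m q [Sum.inl r.1]).map (fun z => (enc r.1 0 p, z))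

lemma mem_comp2 {P : List (Rule T)} {m p q : ℕ} {s : Rule T} :
    s ∈ comp2 P m p q ↔ ∃ r ∈ P,
      (∃ w < m, s = (enc r.1 (w+1) p, [Sum.inl (enc r.1 w p)])) ∨
      (∃ z ∈ weights m q r.2, s = (enc r.1 0 p, z)) ∨
      (∃ z ∈ weights m q [Sum.inl r.1], s = (enc r.1 0 p, z)) := by
  simp only [comp2, List.mem_flatMap, List.mem_append, List.mem_map, List.mem_range, or_assoc,
    eq_comm (a := s)]

lemma comp2_lf {P : List (Rule T)} {m p q : ℕ} (hP : ∀ r ∈ P, r.2 ≠ []) {s : Rule T}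
    (h : s ∈ comp2 P m p q) : s.2 ≠ [] := by
  obtain ⟨r, hr, ⟨w, _, rfl⟩ | ⟨z, hz, rfl⟩ | ⟨z, hz, rfl⟩⟩ := mem_comp2.1 h
  · simp
  · rintro h
    have := weights_dec hz
    simp only at h
    subst h
    exact hP r hr this.symm
  · rintro h
    have := weights_dec hz
    simp only at h
    subst h
    simp at this

lemma comp2_sound {P : List (Rule T)} {m p q : ℕ} {x y : SForm T}
    (h : RStep (comp2 P m p q) x y) : Der P (x.map dec) (y.map dec) := by
  obtain ⟨s, hs, u, v, rfl, rfl⟩ := h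
  simp only [List.map_append, List.map_cons]
  have key : Der P [dec (Sum.inl s.1)] (s.2.map dec) := by
    obtain ⟨r, hr, ⟨w, _, rfl⟩ | ⟨z, hz, rfl⟩ | ⟨z, hz, rfl⟩⟩ := mem_comp2.1 hs
    · simp only [dec, enc, Nat.unpair_pair, List.map_cons, List.map_nil]
      exact .refl
    · simp only [dec, enc, Nat.unpair_pair, weights_dec hz]
      exact .single (rstep_single.2 hr)
    · simp only [dec, enc, Nat.unpair_pair, weights_dec hz]
      exact .refl
  simpa using Der.ctx key (u.map dec) (v.map dec)

lemma Wt.parity {m p : ℕ} {x X : SForm T} {s : ℕ} (h : Wt m p x X s) :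
    ∀ n, Sum.inl n ∈ X → n.unpair.2.unpair.2 = p := by
  induction h with
  | nil => simp
  | term a _ ih => simpa using ih
  | nt A w hw _ ih =>
    intro n hn
    simp only [List.mem_cons, Sum.inl.injEq] at hn
    rcases hn with rfl | hn
    · simp [enc]
    · exact ih n hn

lemma Wt.blocked {P : List (Rule T)} {m p q : ℕ} (hpq : p ≠ q) {x X : SForm T} {s : ℕ}
    (h : Wt m q x X s) : ¬ ∃ z, RStep (comp2 P m p q) X z := by
  rintro ⟨z, hz⟩
  obtain ⟨r, hr, hm⟩ := rstep_mem hz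
  have := h.parity _ hm
  apply hpq
  rw [← this]
  obtain ⟨r, hr, ⟨w, _, rfl⟩ | ⟨z, hz, rfl⟩ | ⟨z, hz, rfl⟩⟩ := mem_comp2.1 hr <;> simp [enc]

lemma Wt.split {m p : ℕ} {x y X : SForm T} {s : ℕ} (h : Wt m p (x ++ y) X s) :
    ∃ X1 X2 s1 s2, X = X1 ++ X2 ∧ s = s1 + s2 ∧ Wt m p x X1 s1 ∧ Wt m p y X2 s2 := by
  induction x generalizing X s with
  | nil => exact ⟨[], X, 0, s, rfl, by simp, .nil, h⟩
  | cons a x ih =>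
    cases h with
    | term a h =>
      obtain ⟨X1, X2, s1, s2, rfl, rfl, h1, h2⟩ := ih h
      exact ⟨_, X2, s1, s2, rfl, rfl, .term a h1, h2⟩
    | nt A w hw h =>
      obtain ⟨X1, X2, s1, s2, rfl, rfl, h1, h2⟩ := ih h
      exact ⟨_, X2, _, s2, rfl, by ring, .nt A w hw h1, h2⟩

lemma Wt.exists {m p : ℕ} (y : SForm T) (s : ℕ) (hs : s ≤ m) (h1 : ntCount y ≤ s)
    (h0 : ntCount y = 0 → s = 0) : ∃ Y, Wt m p y Y s := by
  induction y generalizing s with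
  | nil =>
    have := h0 rfl
    subst this
    exact ⟨[], .nil⟩
  | cons a y ih =>
    cases a with
    | inr a =>
      obtain ⟨Y, hY⟩ := ih s hs h1 h0
      exact ⟨_, .term a hY⟩
    | inl A =>
      have hc : ntCount (Sum.inl A :: y) = ntCount y + 1 := rfl
      rw [hc] at h1
      by_cases hy : ntCount y = 0
      · obtain ⟨Y, hY⟩ := ih 0 (by omega) (by omega) (by simp)
        have := Wt.nt A (s - 1) (by omega) hY
        rw [show s - 1 + 1 + 0 = s by omega] at this
        exact ⟨_, this⟩
      · obtain ⟨Y, hY⟩ := ih (s - 1) (by omega) (by omega) (by omega)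
        have := Wt.nt A 0 (by omega) hY
        rw [show 0 + 1 + (s - 1) = s by omega] at this
        exact ⟨_, this⟩

/-- a single weighted nonterminal -/
lemma chain {P : List (Rule T)} {m p q : ℕ} {r : Rule T} (hr : r ∈ P) {w : ℕ} (hw : w < m)
    {z : SForm T} (hz : z ∈ weights m q r.2 ∨ z ∈ weights m q [Sum.inl r.1]) :
    StepsN (comp2 P m p q) (w + 1) [Sum.inl (enc r.1 w p)] z := by
  induction w with
  | zero =>
    refine ⟨z, rstep_single.2 (mem_comp2.2 ⟨r, hr, Or.inr ?_⟩), rfl⟩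
    rcases hz with hz | hz
    · exact Or.inl ⟨z, hz, rfl⟩
    · exact Or.inr ⟨z, hz, rfl⟩
  | succ w ih =>
    exact ⟨_, rstep_single.2 (mem_comp2.2 ⟨r, hr, Or.inl ⟨w, by omega, rfl⟩⟩), ih (by omega)⟩

lemma Wt.dummy {P : List (Rule T)} {m p q : ℕ} {x X Y : SForm T} {s s' : ℕ}
    (hx : ∀ A, Sum.inl A ∈ x → ∃ r ∈ P, r.1 = A)
    (h : Wt m p x X s) (h' : Wt m q x Y s') : StepsN (comp2 P m p q) s X Y := by
  induction h generalizing Y s' with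
  | nil => cases h'; rfl
  | term a h ih =>
    cases h' with
    | term _ h' =>
      have := (ih (fun A hA => hx A (by simp [hA])) h').ctx [Sum.inr a] []
      simpa using this
  | nt A w hw h ih =>
    cases h' with
    | nt _ w' hw' h' =>
      obtain ⟨r, hr, rfl⟩ := hx A (by simp)
      refine StepsN.app (x := [_]) (x' := [_]) (chain hr hw (Or.inr ?_))
        (ih (fun A hA => hx A (by simp [hA])) h')
      exact (Wt.nt r.1 w' hw' Wt.nil).mem

lemma lhs_of_der {P : List (Rule T)} {x : SForm T} {w : List T}
    (h : Der P x (w.map Sum.inr)) : ∀ A, Sum.inl A ∈ x → ∃ r ∈ P, r.1 = A := by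
  induction h using Relation.ReflTransGen.head_induction_on with
  | refl => simp
  | head h1 _ ih =>
    obtain ⟨r, hr, u, v, rfl, rfl⟩ := h1
    intro A hA
    simp only [List.mem_append, List.mem_cons, Sum.inl.injEq] at hA
    rcases hA with hA | rfl | hA
    · exact ih A (by simp [hA])
    · exact ⟨r, hr, rfl⟩
    · exact ih A (by simp [hA])

def sys (P : List (Rule T)) (m S : ℕ) : CDGS T where
  deg := 2
  start := enc S (m - 1) 0
  comp := fun i => comp2 P m i.val (1 - i.val)

lemma ntCount_term (w : List T) : ntCount (w.map Sum.inr : SForm T) = 0 := by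
  simp [ntCount]

lemma sys_complete {P : List (Rule T)} {m S : ℕ} {x : SForm T} {w : List T}
    (h : Relation.ReflTransGen (BStep P m) x (w.map Sum.inr)) :
    ∀ (i : Fin 2) (X : SForm T) (s : ℕ), Wt m i.val x X s → (ntCount x = 0 ∨ s = m) →
      Relation.ReflTransGen ((sys P m S).ModeStep (.conj .t (.eq m))) X (w.map Sum.inr) := by
  induction h using Relation.ReflTransGen.head_induction_on with
  | refl =>
    intro i X s hX _
    have : X = w.map Sum.inr := by
      clear * - hX
      induction w generalizing X s with
      | nil => cases hX; rfl
      | cons a w ih =>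
        cases hX with
        | term _ h => simp [ih _ _ h]
    rw [this]
  | head h1 h2 ih =>
    intro i X s hX hs
    obtain ⟨⟨r, hr, u, v, rfl, rfl⟩, hc⟩ := h1
    have hsm : s = m := by
      rcases hs with hs | hs
      · simp [ntCount] at hs
      · exact hs
    subst hsm
    have hder : Der P _ _ := Relation.ReflTransGen.mono (fun _ _ h => h.1) _ _ h2
    have hl := lhs_of_der hder
    obtain ⟨s', hs', hs1, hs2⟩ : ∃ s' ≤ s, ntCount (u ++ r.2 ++ v) ≤ s' ∧
        ((ntCount (u ++ r.2 ++ v) = 0 ∧ s' = 0) ∨ (ntCount (u ++ r.2 ++ v) ≠ 0 ∧ s' = s)) := by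
      by_cases h0 : ntCount (u ++ r.2 ++ v) = 0
      · exact ⟨0, by omega, by omega, Or.inl ⟨h0, rfl⟩⟩
      · exact ⟨s, le_rfl, hc, Or.inr ⟨h0, rfl⟩⟩
    obtain ⟨Y, hY⟩ := Wt.exists (m := s) (p := 1 - i.val) _ s' hs' hs1 (by omega)
    obtain ⟨j, hj⟩ : ∃ j : Fin 2, j.val = 1 - i.val := ⟨⟨1 - i.val, by omega⟩, rfl⟩
    refine .head ⟨i, s, ?_, ?_, rfl⟩ (ih j Y s' (hj ▸ hY) (by omega))
    · show StepsN (comp2 P s i.val (1 - i.val)) s X Y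
      obtain ⟨Xu, Xa, su, sa, rfl, rfl, hXu, hXa⟩ := hX.split
      obtain ⟨Ya, Yv, ta, tv, rfl, rfl, hYa, hYv⟩ := hY.split
      obtain ⟨Yu, Yz, tu, tz, rfl, rfl, hYu, hYz⟩ := hYa.split
      cases hXa with
      | nt _ w hw hXv =>
        have e1 := Wt.dummy (P := P) (fun A hA => hl A (by simp [hA])) hXu hYu
        have e2 := Wt.dummy (P := P) (fun A hA => hl A (by simp [hA])) hXv hYv
        have e3 := chain (p := i.val) hr hw (Or.inl hYz.mem)
        simpa using e1.app (e3.app e2)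
    · exact hY.blocked (by omega)

theorem fin_sub (lf : Bool) (L : Set (List T)) (h : L ∈ CFFamFin T) :
    ∃ k : ℕ, 1 ≤ k ∧ L ∈ CDFam T lf 2 (Mode.conj Mode.t (Mode.eq k)) := by
  obtain ⟨m, hm, G, hL, hB⟩ := h
  refine ⟨m, hm, sys (lfRules G.rules) m G.start, le_rfl, ?_, ?_⟩
  · intro _ i r hr
    refine comp2_lf ?_ hr
    intro r hr
    obtain ⟨z, _, _, h, _⟩ := mem_lfRules.1 hr
    exact h
  · unfold EqL at *
    rw [← hL]
    ext w
    simp only [Set.mem_sdiff, Set.mem_singleton_iff, and_congr_left_iff]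
    intro hw
    constructor
    · intro h
      have key : ∀ x y, (sys (lfRules G.rules) m G.start).ModeStep (.conj .t (.eq m)) x y →
          Der G.rules (x.map dec) (y.map dec) := by
        rintro x y ⟨i, n, hs, hmode⟩
        have := hs.der
        clear hs hmode
        induction this with
        | refl => exact .refl
        | tail _ h ih =>
          refine ih.trans ?_
          have h' := comp2_sound h
          clear * - h'
          revert h'
          generalize List.map dec _ = a
          generalize List.map dec _ = b
          intro h'
          induction h' with
          | refl => exact .refl
          | tail _ h ih => exact ih.trans (rstep_lf_der h)
      have key2 : ∀ y, Relation.TransGen ((sys (lfRules G.rules) m G.start).ModeStep (.conj .t (.eq m)))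
          [Sum.inl (sys (lfRules G.rules) m G.start).start] y →
          Der G.rules [Sum.inl G.start] (y.map dec) := by
        intro y hy
        induction hy with
        | single h => simpa [sys, dec, enc] using key _ _ h
        | tail _ h ih => exact ih.trans (key _ _ h)
      have := key2 _ h
      rw [List.map_map] at this
      exact this
    · intro h
      obtain ⟨_, hd⟩ := hB h
      obtain ⟨x', hx', hd'⟩ := lf_complete hd
      have hx : x' = [Sum.inl G.start] := by
        cases hx' with
        | keep _ h => cases h; rfl
        | drop _ _ h =>
          cases h
          exfalso
          rcases Relation.ReflTransGen.cases_head hd' with h | ⟨y, h, _⟩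
          · exact hw (by simpa using h.symm)
          · exact rstep_nil h.1
      subst hx
      have hW : Wt m (0 : Fin 2).val ([Sum.inl G.start] : SForm T)
          [Sum.inl (enc G.start (m-1) 0)] m := by
        have := Wt.nt (T := T) (p := 0) G.start (m - 1) (by omega : m - 1 < m) Wt.nil
        rw [show m - 1 + 1 + 0 = m by omega] at this
        exact this
      have := sys_complete (S := G.start) hd' 0 _ m hW (Or.inr rfl)
      rcases Relation.reflTransGen_iff_eq_or_transGen.1 this with h | h
      · exfalso
        cases w with
        | nil => simp at h
        | cons a w => simp at h
      · exact h

/-! A language that is not context-free. -/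

lemma pick {P : List (Rule T)} {l : ℕ} (hl : 1 ≤ l) {d : ℕ} {z : SForm T} {w : List T}
    (h : StepsN P d z (w.map Sum.inr)) :
    (∃ d' ≤ d, ∃ B w1 w' w2, Der P z (w1.map Sum.inr ++ [Sum.inl B] ++ w2.map Sum.inr) ∧
      w = w1 ++ w' ++ w2 ∧ StepsN P d' [Sum.inl B] (w'.map Sum.inr) ∧ l < w'.length) ∨
    w.length ≤ z.length * l := by
  induction z generalizing d w with
  | nil =>
    right
    cases d with
    | zero =>
      have h : [] = w.map Sum.inr := h
      have : w = [] := by simpa using h.symm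
      simp [this]
    | succ d =>
      obtain ⟨_, h, _⟩ := h
      exact absurd h rstep_nil
  | cons a z ih =>
    obtain ⟨d1, d2, w1, w2, rfl, rfl, h1, h2⟩ := StepsN.split (x := [a]) h
    by_cases hw1 : l < w1.length
    · left
      cases a with
      | inl A =>
        refine ⟨d1, by omega, A, [], w1, w2, ?_, by simp, h1, hw1⟩
        exact Der.app (x := [Sum.inl A]) (x' := [Sum.inl A]) .refl h2.der
      | inr a =>
        exfalso
        cases d1 with
        | zero =>
          have h1 : [Sum.inr a] = w1.map Sum.inr := h1
          have := congrArg List.length h1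
          simp at this
          omega
        | succ d =>
          obtain ⟨_, h1, _⟩ := h1
          exact rstep_term (w := [a]) h1
    · rcases ih h2 with ⟨d', hd', B, v1, v', v2, g1, rfl, g2, g3⟩ | g
      · left
        refine ⟨d', by omega, B, w1 ++ v1, v', v2, ?_, by simp, g2, g3⟩
        simpa using Der.app h1.der g1
      · right
        simp only [List.length_append, List.length_cons, Nat.add_mul]
        omega

lemma find {P : List (Rule T)} {l C : ℕ} (hl : 1 ≤ l) (hC : ∀ r ∈ P, r.2.length ≤ C) (d : ℕ) :
    ∀ {A : ℕ} {w : List T}, StepsN P d [Sum.inl A] (w.map Sum.inr) → l < w.length →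
    ∃ B u y v, B ∈ P.map Prod.fst ∧ Der P [Sum.inl A] (u.map Sum.inr ++ [Sum.inl B] ++ v.map Sum.inr) ∧
      w = u ++ y ++ v ∧ Der P [Sum.inl B] (y.map Sum.inr) ∧ l < y.length ∧ y.length ≤ C * l := by
  induction d using Nat.strong_induction_on with
  | _ d ih =>
    intro A w h hw
    cases d with
    | zero =>
      have h : [Sum.inl A] = w.map Sum.inr := h
      cases w <;> simp at h
    | succ d =>
      have h0 := h
      obtain ⟨z, h1, h2⟩ := h
      rcases pick hl h2 with ⟨d', hd', B, w1, w', w2, g1, rfl, g2, g3⟩ | g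
      · obtain ⟨B', u, y, v, hB, k1, rfl, k2, k3, k4⟩ := ih d' (by omega) g2 g3
        refine ⟨B', w1 ++ u, y, v ++ w2, hB, ?_, by simp, k2, k3, k4⟩
        refine .head h1 (g1.trans ?_)
        simpa using Der.ctx k1 (w1.map Sum.inr) (w2.map Sum.inr)
      · have hr := rstep_single.1 h1
        refine ⟨A, [], w, [], List.mem_map.2 ⟨_, hr, rfl⟩, .refl, by simp, h0.der, hw, ?_⟩
        exact g.trans (Nat.mul_le_mul_right _ (hC _ hr))

def abc (n : ℕ) : List ℕ := List.replicate n 0 ++ List.replicate n 1 ++ List.replicate n 2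

def abcL : Set (List ℕ) := {w | ∃ n, 1 ≤ n ∧ w = abc n}

lemma abc_len (n : ℕ) : (abc n).length = 3 * n := by
  simp [abc]; omega

lemma abc_get0 {n i : ℕ} (h : (abc n)[i]? = some 0) : i < n := by
  by_contra hc
  unfold abc at h
  rw [List.append_assoc, List.getElem?_append_right (by simpa using hc)] at h
  have := List.mem_of_getElem? h
  simp at this

lemma abc_get2 {n i : ℕ} (h : (abc n)[i]? = some 2) : 2 * n ≤ i := by
  by_contra hc
  unfold abc at h
  rw [List.getElem?_append_left (by simp; omega)] at h
  have := List.mem_of_getElem? h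
  simp at this

lemma abc_miss {n : ℕ} {u y v : List ℕ} (h : abc n = u ++ y ++ v) (hy : y.length ≤ n) :
    0 ∉ y ∨ 2 ∉ y := by
  by_contra hc
  push Not at hc
  obtain ⟨h0, h2⟩ := hc
  obtain ⟨i, hi, e0⟩ := List.mem_iff_getElem.1 h0
  obtain ⟨j, hj, e2⟩ := List.mem_iff_getElem.1 h2
  have a0 : (abc n)[u.length + i]? = some 0 := by
    rw [h, List.append_assoc, List.getElem?_append_right (by omega)]
    simp [List.getElem?_append_left hi, e0, hi]
  have a2 : (abc n)[u.length + j]? = some 2 := by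
    rw [h, List.append_assoc, List.getElem?_append_right (by omega)]
    simp [List.getElem?_append_left hj, e2, hj]
  have := abc_get0 a0
  have := abc_get2 a2
  omega

lemma abc_count0 (n : ℕ) : (abc n).count 0 = n := by
  simp [abc, List.count_replicate]

lemma abc_count2 (n : ℕ) : (abc n).count 2 = n := by
  simp [abc, List.count_replicate]

lemma bound_exists (P : List (Rule T)) : ∃ C, 1 ≤ C ∧ ∀ r ∈ P, r.2.length ≤ C := by
  induction P with
  | nil => exact ⟨1, le_rfl, by simp⟩
  | cons r P ih =>
    obtain ⟨C, h1, h2⟩ := ih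
    refine ⟨C + r.2.length, by omega, ?_⟩
    intro s hs
    rcases List.mem_cons.1 hs with rfl | hs
    · omega
    · have := h2 s hs
      omega

theorem abc_not_cf (G : CFG ℕ) (h : EqL G.lang abcL) : False := by
  obtain ⟨C, hC1, hC⟩ := bound_exists G.rules
  have hmem : ∀ w : List ℕ, w ≠ [] → (w ∈ G.lang ↔ w ∈ abcL) := by
    intro w hw
    have := Set.ext_iff.1 h w
    simpa [hw] using this
  have main : ∀ l : ℕ, ∃ (B : {B // B ∈ G.rules.map Prod.fst}) (b : Bool) (u y v : List ℕ),
      Der G.rules [Sum.inl G.start] (u.map Sum.inr ++ [Sum.inl B.1] ++ v.map Sum.inr) ∧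
      abc (C * (l + 1)) = u ++ y ++ v ∧ Der G.rules [Sum.inl B.1] (y.map Sum.inr) ∧
      l + 1 < y.length ∧ y.length ≤ C * (l + 1) ∧ (cond b 0 2) ∉ y := by
    intro l
    have hle : l + 1 ≤ C * (l + 1) := Nat.le_mul_of_pos_left _ hC1
    have hlen := abc_len (C * (l + 1))
    have hin : abc (C * (l + 1)) ∈ G.lang := by
      refine (hmem _ ?_).2 ⟨_, by omega, rfl⟩
      intro h0
      rw [h0] at hlen
      simp at hlen
      omega
    obtain ⟨d, hd⟩ := Der.stepsN hin
    obtain ⟨B, u, y, v, hB, k1, k2, k3, k4, k5⟩ := find (l := l + 1) (by omega) hC d hd (by omega)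
    rcases abc_miss k2 k5 with hm | hm
    · exact ⟨⟨B, hB⟩, true, u, y, v, k1, k2, k3, k4, k5, hm⟩
    · exact ⟨⟨B, hB⟩, false, u, y, v, k1, k2, k3, k4, k5, hm⟩
  choose B b u y v k1 k2 k3 k4 k5 k6 using main
  have : Finite {B // B ∈ G.rules.map Prod.fst} := List.finite_toSet _
  obtain ⟨c, hc⟩ := Finite.exists_infinite_fiber (fun l => (B l, b l))
  have hinf : ((fun l => (B l, b l)) ⁻¹' {c}).Infinite := Set.infinite_coe_iff.1 hc
  obtain ⟨l, hl⟩ := hinf.nonempty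
  obtain ⟨l', hl', hgt⟩ := hinf.exists_gt (C * (l + 1))
  have heq : (B l, b l) = (B l', b l') := by
    rw [Set.mem_preimage, Set.mem_singleton_iff] at hl hl'
    exact hl.trans hl'.symm
  simp only [Prod.mk.injEq] at heq
  have k4' := k4 l'
  have k5l := k5 l
  have hnew : (u l ++ y l' ++ v l) ∈ G.lang := by
    have e := k1 l
    rw [heq.1] at e
    refine Relation.ReflTransGen.trans e ?_
    simpa using Der.ctx (k3 l') ((u l).map Sum.inr) ((v l).map Sum.inr)
  have hne : (u l ++ y l' ++ v l) ≠ [] := by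
    intro h0
    have := congrArg List.length h0
    simp only [List.length_append, List.length_nil] at this
    omega
  obtain ⟨j, _, hj⟩ := (hmem _ hne).1 hnew
  have len1 := congrArg List.length hj
  have len2 := congrArg List.length (k2 l)
  rw [abc_len] at len1 len2
  simp only [List.length_append] at len1 len2
  have hm1 := k6 l
  have hm2 := k6 l'
  rw [← heq.2] at hm2
  have hcount : j = C * (l + 1) := by
    cases hb : b l with
    | true =>
      rw [hb] at hm1 hm2
      simp only [cond_true] at hm1 hm2
      have c1 := congrArg (List.count 0) hj
      have c2 := congrArg (List.count 0) (k2 l)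
      rw [abc_count0] at c1 c2
      simp only [List.count_append, List.count_eq_zero_of_not_mem hm1,
        List.count_eq_zero_of_not_mem hm2] at c1 c2
      omega
    | false =>
      rw [hb] at hm1 hm2
      simp only [cond_false] at hm1 hm2
      have c1 := congrArg (List.count 2) hj
      have c2 := congrArg (List.count 2) (k2 l)
      rw [abc_count2] at c1 c2
      simp only [List.count_append, List.count_eq_zero_of_not_mem hm1,
        List.count_eq_zero_of_not_mem hm2] at c1 c2
      omega
  omega

/-! The two component system for this language. -/

def Q1 : List (Rule ℕ) :=
  [(2, [Sum.inr 0, Sum.inl 3, Sum.inr 1]), (2, [Sum.inr 0, Sum.inr 1]),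
    (4, [Sum.inr 2, Sum.inl 5]), (4, [Sum.inr 2])]

def Q2 : List (Rule ℕ) :=
  [(0, [Sum.inl 1]), (1, [Sum.inl 2, Sum.inl 4]), (3, [Sum.inl 2]), (5, [Sum.inl 4])]

def FF (i j : ℕ) (X Y : SForm ℕ) : SForm ℕ :=
  (List.replicate i 0).map Sum.inr ++ (X ++ ((List.replicate i 1).map Sum.inr ++
    ((List.replicate j 2).map Sum.inr ++ Y)))

lemma stepFF {P : List (Rule ℕ)} {i j : ℕ} {X Y z : SForm ℕ} :
    RStep P (FF i j X Y) z ↔ (∃ X', RStep P X X' ∧ z = FF i j X' Y) ∨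
      (∃ Y', RStep P Y Y' ∧ z = FF i j X Y') := by
  unfold FF
  constructor
  · intro h0
    rcases rstep_append.1 h0 with ⟨_, h1, rfl⟩ | ⟨_, h1, rfl⟩
    · exact absurd h1 rstep_term
    rcases rstep_append.1 h1 with ⟨_, h2, rfl⟩ | ⟨_, h2, rfl⟩
    · exact Or.inl ⟨_, h2, rfl⟩
    rcases rstep_append.1 h2 with ⟨_, h3, rfl⟩ | ⟨_, h3, rfl⟩
    · exact absurd h3 rstep_term
    rcases rstep_append.1 h3 with ⟨_, h4, rfl⟩ | ⟨_, h4, rfl⟩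
    · exact absurd h4 rstep_term
    exact Or.inr ⟨_, h4, rfl⟩
  · rintro (⟨X', h, rfl⟩ | ⟨Y', h, rfl⟩)
    · exact rstep_append.2 (Or.inr ⟨_, rstep_append.2 (Or.inl ⟨_, h, rfl⟩), rfl⟩)
    · exact rstep_append.2 (Or.inr ⟨_, rstep_append.2 (Or.inr ⟨_, rstep_append.2 (Or.inr
        ⟨_, rstep_append.2 (Or.inr ⟨_, h, rfl⟩), rfl⟩), rfl⟩), rfl⟩)

lemma FF_X (i j : ℕ) (X Y : SForm ℕ) :
    FF i j (Sum.inr 0 :: (X ++ [Sum.inr 1])) Y = FF (i + 1) j X Y := by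
  unfold FF
  rw [List.replicate_succ' (a := 0), List.replicate_succ (a := 1)]
  simp

lemma FF_Y (i j : ℕ) (X Y : SForm ℕ) : FF i j X (Sum.inr 2 :: Y) = FF i (j + 1) X Y := by
  unfold FF
  rw [List.replicate_succ' (a := 2)]
  simp

def Xs (X : SForm ℕ) : Prop := X = [Sum.inl 3] ∨ X = []
def Ys (Y : SForm ℕ) : Prop := Y = [Sum.inl 5] ∨ Y = []

lemma q1A {i j : ℕ} {X' Y : SForm ℕ} (h : RStep Q1 [Sum.inl 2] X') :
    ∃ X, Xs X ∧ FF i j X' Y = FF (i + 1) j X Y := by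
  rw [rstep_single] at h
  simp only [Q1, List.mem_cons, Prod.mk.injEq, List.not_mem_nil, or_false] at h
  rcases h with ⟨_, rfl⟩ | ⟨_, rfl⟩ | ⟨h, _⟩ | ⟨h, _⟩
  · exact ⟨[Sum.inl 3], Or.inl rfl, FF_X i j [Sum.inl 3] Y⟩
  · exact ⟨[], Or.inr rfl, FF_X i j [] Y⟩
  · omega
  · omega

lemma q1B {i j : ℕ} {X Y' : SForm ℕ} (h : RStep Q1 [Sum.inl 4] Y') :
    ∃ Y, Ys Y ∧ FF i j X Y' = FF i (j + 1) X Y := by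
  rw [rstep_single] at h
  simp only [Q1, List.mem_cons, Prod.mk.injEq, List.not_mem_nil, or_false] at h
  rcases h with ⟨h, _⟩ | ⟨h, _⟩ | ⟨_, rfl⟩ | ⟨_, rfl⟩
  · omega
  · omega
  · exact ⟨[Sum.inl 5], Or.inl rfl, FF_Y i j X [Sum.inl 5]⟩
  · exact ⟨[], Or.inr rfl, FF_Y i j X []⟩

lemma q1X {X X' : SForm ℕ} (h : Xs X) : ¬ RStep Q1 X X' := by
  rcases h with rfl | rfl
  · rw [rstep_single]; simp [Q1]
  · exact rstep_nil

lemma q1Y {X X' : SForm ℕ} (h : Ys X) : ¬ RStep Q1 X X' := by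
  rcases h with rfl | rfl
  · rw [rstep_single]; simp [Q1]
  · exact rstep_nil

lemma q2X {X X' : SForm ℕ} (h : Xs X) (h' : RStep Q2 X X') : X' = [Sum.inl 2] := by
  rcases h with rfl | rfl
  · rw [rstep_single] at h'; simpa [Q2] using h'
  · exact absurd h' rstep_nil

lemma q2Y {X X' : SForm ℕ} (h : Ys X) (h' : RStep Q2 X X') : X' = [Sum.inl 4] := by
  rcases h with rfl | rfl
  · rw [rstep_single] at h'; simpa [Q2] using h'
  · exact absurd h' rstep_nil

lemma q2A {X' : SForm ℕ} : ¬ RStep Q2 [Sum.inl 2] X' := by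
  rw [rstep_single]; simp [Q2]

lemma q2B {X' : SForm ℕ} : ¬ RStep Q2 [Sum.inl 4] X' := by
  rw [rstep_single]; simp [Q2]

def Inv (x : SForm ℕ) : Prop :=
  x = [Sum.inl 0] ∨ (∃ n, x = FF n n [Sum.inl 2] [Sum.inl 4]) ∨
    ∃ n X Y, Xs X ∧ Ys Y ∧ x = FF (n + 1) (n + 1) X Y

lemma inv1 {x y : SForm ℕ} (hx : Inv x) (h : StepsN Q1 2 x y) : Inv y := by
  obtain ⟨z, h1, z', h2, rfl⟩ := h
  rcases hx with rfl | ⟨n, rfl⟩ | ⟨n, X, Y, hX, hY, rfl⟩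
  · rw [rstep_single] at h1
    simp [Q1] at h1
  · right; right
    rcases stepFF.1 h1 with ⟨X', h, rfl⟩ | ⟨Y', h, rfl⟩
    · obtain ⟨X, hX, e⟩ := q1A (i := n) (j := n) (Y := [Sum.inl 4]) h
      rw [e] at h2
      rcases stepFF.1 h2 with ⟨X', h, rfl⟩ | ⟨Y', h, rfl⟩
      · exact absurd h (q1X hX)
      · obtain ⟨Y, hY, e⟩ := q1B (i := n + 1) (j := n) (X := X) h
        exact ⟨n, X, Y, hX, hY, e⟩
    · obtain ⟨Y, hY, e⟩ := q1B (i := n) (j := n) (X := [Sum.inl 2]) h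
      rw [e] at h2
      rcases stepFF.1 h2 with ⟨X', h, rfl⟩ | ⟨Y', h, rfl⟩
      · obtain ⟨X, hX, e⟩ := q1A (i := n) (j := n + 1) (Y := Y) h
        exact ⟨n, X, Y, hX, hY, e⟩
      · exact absurd h (q1Y hY)
  · rcases stepFF.1 h1 with ⟨X', h, rfl⟩ | ⟨Y', h, rfl⟩
    · exact absurd h (q1X hX)
    · exact absurd h (q1Y hY)

lemma inv2 {x y : SForm ℕ} (hx : Inv x) (h : StepsN Q2 2 x y) : Inv y := by
  obtain ⟨z, h1, z', h2, rfl⟩ := h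
  rcases hx with rfl | ⟨n, rfl⟩ | ⟨n, X, Y, hX, hY, rfl⟩
  · rw [rstep_single] at h1
    simp [Q2] at h1
    subst h1
    rw [rstep_single] at h2
    simp [Q2] at h2
    subst h2
    exact Or.inr (Or.inl ⟨0, rfl⟩)
  · rcases stepFF.1 h1 with ⟨X', h, rfl⟩ | ⟨Y', h, rfl⟩
    · exact absurd h q2A
    · exact absurd h q2B
  · right; left
    refine ⟨n + 1, ?_⟩
    rcases stepFF.1 h1 with ⟨X', h, rfl⟩ | ⟨Y', h, rfl⟩
    · obtain rfl := q2X hX h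
      rcases stepFF.1 h2 with ⟨X', h, rfl⟩ | ⟨Y', h, rfl⟩
      · exact absurd h q2A
      · obtain rfl := q2Y hY h
        rfl
    · obtain rfl := q2Y hY h
      rcases stepFF.1 h2 with ⟨X', h, rfl⟩ | ⟨Y', h, rfl⟩
      · obtain rfl := q2X hX h
        rfl
      · exact absurd h q2B

def sysQ : CDGS ℕ where
  deg := 2
  start := 0
  comp := ![Q1, Q2]

lemma FF_nil (n : ℕ) : FF n n [] [] = (abc n).map Sum.inr := by
  simp [FF, abc]

lemma FF_mem {i j A : ℕ} {X Y : SForm ℕ} (h : Sum.inl A ∈ FF i j X Y) :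
    Sum.inl A ∈ X ∨ Sum.inl A ∈ Y := by
  simpa [FF] using h

lemma inv_final {w : List ℕ} (h : Inv (w.map Sum.inr)) : w ∈ abcL := by
  have no : ∀ A : ℕ, Sum.inl A ∉ (w.map Sum.inr : SForm ℕ) := by simp
  rcases h with h | ⟨n, h⟩ | ⟨n, X, Y, hX, hY, h⟩
  · exact absurd (by rw [h]; simp) (no 0)
  · exact absurd (by rw [h]; simp [FF]) (no 2)
  · rcases hX with rfl | rfl
    · exact absurd (by rw [h]; simp [FF]) (no 3)
    rcases hY with rfl | rfl
    · exact absurd (by rw [h]; simp [FF]) (no 5)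
    rw [FF_nil] at h
    exact ⟨n + 1, by omega, (List.map_injective_iff.2 Sum.inr_injective) h⟩

lemma q1block {i j : ℕ} {X Y : SForm ℕ} (hX : Xs X) (hY : Ys Y) :
    ¬ ∃ z, RStep Q1 (FF i j X Y) z := by
  rintro ⟨z, h0⟩
  rcases stepFF.1 h0 with ⟨X', h, rfl⟩ | ⟨Y', h, rfl⟩
  · exact q1X hX h
  · exact q1Y hY h

lemma q2block {i j : ℕ} : ¬ ∃ z, RStep Q2 (FF i j [Sum.inl 2] [Sum.inl 4]) z := by
  rintro ⟨z, h0⟩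
  rcases stepFF.1 h0 with ⟨X', h, rfl⟩ | ⟨Y', h, rfl⟩
  · exact q2A h
  · exact q2B h

abbrev QStep := sysQ.ModeStep (.conj .t (.eq 2))

lemma q1phase (n : ℕ) (X Y X' Y' : SForm ℕ) (hX : Xs X) (hY : Ys Y)
    (hX' : RStep Q1 [Sum.inl 2] X') (hY' : RStep Q1 [Sum.inl 4] Y')
    (e : FF n n X' Y' = FF (n + 1) (n + 1) X Y) :
    QStep (FF n n [Sum.inl 2] [Sum.inl 4]) (FF (n + 1) (n + 1) X Y) := by
  refine ⟨(0 : Fin 2), 2, ?_, ?_, rfl⟩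
  · rw [← e]
    exact ⟨_, stepFF.2 (Or.inl ⟨_, hX', rfl⟩), _, stepFF.2 (Or.inr ⟨_, hY', rfl⟩), rfl⟩
  · exact q1block hX hY

lemma q2phase (n : ℕ) :
    QStep (FF n n [Sum.inl 3] [Sum.inl 5]) (FF n n [Sum.inl 2] [Sum.inl 4]) := by
  refine ⟨(1 : Fin 2), 2, ?_, ?_, rfl⟩
  · refine ⟨_, stepFF.2 (Or.inl ⟨[Sum.inl 2], ?_, rfl⟩), _,
      stepFF.2 (Or.inr ⟨[Sum.inl 4], ?_, rfl⟩), rfl⟩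
    · exact rstep_single.2 (by simp [sysQ, Q2])
    · exact rstep_single.2 (by simp [sysQ, Q2])
  · exact q2block

lemma reachAB (n : ℕ) : Relation.TransGen QStep [Sum.inl 0] (FF n n [Sum.inl 2] [Sum.inl 4]) := by
  induction n with
  | zero =>
    refine .single ⟨(1 : Fin 2), 2, ?_, q2block, rfl⟩
    exact ⟨[Sum.inl 1], rstep_single.2 (by simp [sysQ, Q2]), _,
      (rstep_single (z := [Sum.inl 2, Sum.inl 4])).2 (by simp [sysQ, Q2]), rfl⟩
  | succ n ih =>
    refine (ih.tail (q1phase n [Sum.inl 3] [Sum.inl 5] [Sum.inr 0, Sum.inl 3, Sum.inr 1]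
      [Sum.inr 2, Sum.inl 5] (Or.inl rfl) (Or.inl rfl) ?_ ?_ ?_)).tail (q2phase (n + 1))
    · exact rstep_single.2 (by simp [Q1])
    · exact rstep_single.2 (by simp [Q1])
    · rw [FF_Y]
      exact FF_X n (n + 1) [Sum.inl 3] _

lemma sysQ_lang : sysQ.lang (.conj .t (.eq 2)) = abcL := by
  ext w
  constructor
  · intro h
    have key : ∀ x y, QStep x y → Inv x → Inv y := by
      rintro x y ⟨i, m, hs, _, hm⟩ hx
      have hm : m = 2 := hm
      subst hm
      change Fin 2 at i
      fin_cases i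
      · exact inv1 hx hs
      · exact inv2 hx hs
    have key2 : ∀ y, Relation.TransGen QStep [Sum.inl 0] y → Inv y := by
      intro y hy
      induction hy with
      | single h => exact key _ _ h (Or.inl rfl)
      | tail _ h ih => exact key _ _ h ih
    exact inv_final (key2 _ h)
  · rintro ⟨n, hn, rfl⟩
    obtain ⟨n, rfl⟩ := Nat.exists_eq_add_of_le' hn
    show Relation.TransGen QStep [Sum.inl 0] _
    rw [← FF_nil]
    refine (reachAB n).tail (q1phase n [] [] [Sum.inr 0, Sum.inr 1] [Sum.inr 2]
      (Or.inr rfl) (Or.inr rfl) ?_ ?_ ?_)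
    · exact rstep_single.2 (by simp [Q1])
    · exact rstep_single.2 (by simp [Q1])
    · rw [FF_Y]
      exact FF_X n (n + 1) [] _

lemma abc_mem (lf : Bool) : abcL ∈ CDFam ℕ lf 2 (.conj .t (.eq 2)) := by
  refine ⟨sysQ, le_rfl, ?_, ?_⟩
  · intro _ i r hr
    change Fin 2 at i
    fin_cases i
    · simp [sysQ, Q1] at hr
      rcases hr with rfl | rfl | rfl | rfl <;> simp
    · simp [sysQ, Q2] at hr
      rcases hr with rfl | rfl | rfl | rfl <;> simp
  · rw [sysQ_lang]
    rfl

end Helpers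

/-- L_fin(CF) ⊊ ⋃_{k∈ℕ} L(CD_2, CF[−λ], (t∧=k)),
both with and without erasing rules. -/
theorem stmt4 (lf : Bool) :
    CFFamFin ℕ ⊂
      { L | ∃ k : ℕ, 1 ≤ k ∧ L ∈ CDFam ℕ lf 2 (Mode.conj Mode.t (Mode.eq k)) } := by
  rw [Set.ssubset_iff_exists]
  refine ⟨fun L hL => fin_sub lf L hL, abcL, ⟨2, by omega, abc_mem lf⟩, ?_⟩
  rintro ⟨m, _, G, hG, _⟩
  exact abc_not_cf G hG

end CDHybrid
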